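/- Assume ‖θ‖_T > 0, 0 < ζ < 1 − F_α(|q_α| + ‖θ‖_T) e^{‖θ‖_T²}, and |q_α| ≥ max(1, 2(T+1)‖θ‖_T). Let γ₁ be a maximizer of Γ₁ over [0,ζ] and ν* = (ỹ^{1,γ₁}, v^{γ₁}). Then ν* ∈ U, ν* satisfies the ES constraint at level ζ, J(x,ν*) = A(x) + Γ₁(γ₁), and J(x,ν) ≤ A(x) + Γ₁(γ₁) for every ν ∈ U satisfying the ES constraint at level ζ. -/

import Mathlib

open MeasureTheory Real Set Filter
open scoped RealInnerProductSpace ENNReal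

noncomputable section

abbrev E (d : ℕ) := EuclideanSpace ℝ (Fin d)

/-- ω(t) = T − t + 1 -/
def om (T t : ℝ) : ℝ := T - t + 1

/-- running L²-norm ‖y‖_t = (∫₀^t |y_s|² ds)^{1/2} -/
def nrm {d : ℕ} (y : ℝ → E d) (t : ℝ) : ℝ :=
  Real.sqrt (∫ s in Set.Ioc (0:ℝ) t, ‖y s‖ ^ 2)

/-- running inner product (y,θ)_t = ∫₀^t y_s'θ_s ds -/
def ipr {d : ℕ} (y θ : ℝ → E d) (t : ℝ) : ℝ :=
  ∫ s in Set.Ioc (0:ℝ) t, ⟪y s, θ s⟫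

/-- membership in L²([0,T];ℝ^d) -/
def L2fun {d : ℕ} (T : ℝ) (y : ℝ → E d) : Prop :=
  Measurable y ∧ IntegrableOn (fun t => ‖y t‖ ^ 2) (Set.Ioc 0 T)

def k1 {d : ℕ} (T : ℝ) (θ : ℝ → E d) : ℝ :=
  ∫ t in Set.Ioc (0:ℝ) T, om T t * ‖θ t‖ ^ 2

def k2 {d : ℕ} (T : ℝ) (θ : ℝ → E d) : ℝ :=
  ∫ t in Set.Ioc (0:ℝ) T, om T t ^ 2 * ‖θ t‖ ^ 2

/-- Mills ratio ϖ(z) = e^{z²/2}∫_z^∞ e^{-s²/2} ds -/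
def mills (z : ℝ) : ℝ := Real.exp (z ^ 2 / 2) * ∫ s in Set.Ioi z, Real.exp (-s ^ 2 / 2)

/-- ι_α(u) = 1/ϖ(u + |q_α|) − u -/
def iotaA (qa u : ℝ) : ℝ := 1 / mills (u + |qa|) - u

/-- F_α(z) = (∫_z^∞ e^{-s²/2} ds)/(∫_{|q_α|}^∞ e^{-s²/2} ds) -/
def Fal (qa z : ℝ) : ℝ :=
  (∫ s in Set.Ioi z, Real.exp (-s ^ 2 / 2)) / ∫ s in Set.Ioi |qa|, Real.exp (-s ^ 2 / 2)

/-- f_α(x) = ln F_α(|q_α| + x) -/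
def fal (qa x : ℝ) : ℝ := Real.log (Fal qa (|qa| + x))

/-- G₁(u,λ) -/
def G1fun {d : ℕ} (T : ℝ) (θ : ℝ → E d) (qa u lam : ℝ) : ℝ :=
  ∫ t in Set.Ioc (0:ℝ) T,
    (om T t + lam) ^ 2 * ‖θ t‖ ^ 2 / (lam * iotaA qa u + u * (om T t + lam)) ^ 2

open Classical in
/-- ρ₁(λ) = inf{u ≥ 0 : G₁(u,λ) ≤ 1}, with value +∞ if no such u exists -/
def rho1 {d : ℕ} (T : ℝ) (θ : ℝ → E d) (qa lam : ℝ) : ℝ≥0∞ :=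
  if {u : ℝ | 0 ≤ u ∧ G1fun T θ qa u lam ≤ 1}.Nonempty then
    ENNReal.ofReal (sInf {u : ℝ | 0 ≤ u ∧ G1fun T θ qa u lam ≤ 1})
  else ⊤

open Classical in
/-- ς_λ(t), with ς_λ ≡ 1 if ρ₁(λ) = +∞ -/
def sig {d : ℕ} (T : ℝ) (θ : ℝ → E d) (qa lam t : ℝ) : ℝ :=
  if rho1 T θ qa lam = ⊤ then 1
  else (rho1 T θ qa lam).toReal * (om T t + lam) /
    (lam * iotaA qa (rho1 T θ qa lam).toReal + (rho1 T θ qa lam).toReal * (om T t + lam))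

def lamMax' {d : ℕ} (T : ℝ) (θ : ℝ → E d) (qa : ℝ) : ℝ :=
  (k1 T θ + Real.sqrt (k2 T θ * (iotaA qa 0 ^ 2 - nrm θ T ^ 2) + k1 T θ ^ 2)) /
    (iotaA qa 0 ^ 2 - nrm θ T ^ 2)

/-- Φ₁(λ) = −∫₀^T ς_λ(t)|θ_t|² dt − ln F_α(|q_α| + ‖ς_λθ‖_T) -/
def Phi1 {d : ℕ} (T : ℝ) (θ : ℝ → E d) (qa lam : ℝ) : ℝ :=
  -(∫ t in Set.Ioc (0:ℝ) T, sig T θ qa lam t * ‖θ t‖ ^ 2)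
    - Real.log (Fal qa (|qa| + nrm (fun t => sig T θ qa lam t • θ t) T))

/-- cumulated consumption V_t = ∫₀^t v_s ds -/
def Vtot (v : ℝ → ℝ) (t : ℝ) : ℝ := ∫ s in Set.Ioc (0:ℝ) t, v s

/-- the set U of admissible deterministic strategies -/
def Admiss {d : ℕ} (T : ℝ) (y : ℝ → E d) (v : ℝ → ℝ) : Prop :=
  Measurable y ∧ IntegrableOn (fun t => ‖y t‖ ^ 2) (Set.Ioc 0 T) ∧
    Measurable v ∧ (∀ t ∈ Set.Icc (0:ℝ) T, 0 < v t) ∧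
    IntegrableOn v (Set.Ioc 0 T) ∧
    IntegrableOn (fun t => max (-Real.log (v t)) 0) (Set.Ioc 0 T)

/-- the cost J(x,ν) -/
def Jcost {d : ℕ} (T x : ℝ) (r : ℝ → ℝ) (θ y : ℝ → E d) (v : ℝ → ℝ) : ℝ :=
  (T + 1) * Real.log x
    + (∫ t in Set.Ioc (0:ℝ) T, om T t * (r t + ⟪y t, θ t⟫ - ‖y t‖ ^ 2 / 2))
    + (∫ t in Set.Ioc (0:ℝ) T, (Real.log (v t) - Vtot v t))
    - Vtot v T

/-- A(x) = (T+1)ln x + ∫₀^T ω(t)r_t dt − T ln T -/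
def Aconst (T x : ℝ) (r : ℝ → ℝ) : ℝ :=
  (T + 1) * Real.log x + (∫ t in Set.Ioc (0:ℝ) T, om T t * r t) - T * Real.log T

/-- v^κ_t = κ/(T − tκ) -/
def vk (T k t : ℝ) : ℝ := k / (T - t * k)

/-- the VaR constraint at level ζ -/
def VaROK {d : ℕ} (T : ℝ) (θ y : ℝ → E d) (v : ℝ → ℝ) (qa z : ℝ) : Prop :=
  ∀ t ∈ Set.Icc (0:ℝ) T,
    Real.log (1 - z) ≤ ipr y θ t - nrm y t ^ 2 / 2 - Vtot v t - |qa| * nrm y t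

/-- the ES constraint at level ζ -/
def ESOK {d : ℕ} (T : ℝ) (θ y : ℝ → E d) (v : ℝ → ℝ) (qa z : ℝ) : Prop :=
  ∀ t ∈ Set.Icc (0:ℝ) T,
    Real.log (1 - z) ≤ ipr y θ t - Vtot v t + fal qa (nrm y t)

/-- Γ₁(κ), where φ₁(κ) = Φ₁⁻¹(ln((1−κ)/(1−ζ))) -/
def Gam1 {d : ℕ} (T : ℝ) (θ : ℝ → E d) (qa z : ℝ) (Finv : ℝ → ℝ) (k : ℝ) : ℝ :=
  Real.log (1 - k) + T * Real.log k +
    ∫ t in Set.Ioc (0:ℝ) T, om T t * ‖θ t‖ ^ 2 *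
      (sig T θ qa (Finv (Real.log ((1 - k) / (1 - z)))) t
        - sig T θ qa (Finv (Real.log ((1 - k) / (1 - z)))) t ^ 2 / 2)

/-- the candidate optimal ES investment strategy ỹ^{1,κ} -/
def ystarE {d : ℕ} (T : ℝ) (θ : ℝ → E d) (qa z : ℝ) (Finv : ℝ → ℝ) (k : ℝ) : ℝ → E d :=
  fun t => sig T θ qa (Finv (Real.log ((1 - k) / (1 - z)))) t • θ t

/-
Fix the total consumption `V_T = -log (1 - κ)`. By Jensen's inequality `v^κ` is the best consumption
rate with this total, and the constraint at the horizon asks the investment `y` for the slack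
`(y,θ)_T + f_α(‖y‖_T) ≥ log ((1 - ζ) / (1 - κ))`. Since `f_α` is concave, a Lagrange multiplier `λ`
turns the maximization of the gain under this constraint into a pointwise quadratic problem, solved
by `ς_λ θ` with `λ = φ₁(κ)`; so `Γ₁(κ)` is the optimal value for given `κ`. A bound on the Gaussian
hazard rate `-f_α'` shows that for a large `|q_α|` the running constraints of `ς_λ θ` follow from the
one at the horizon.
-/

open scoped Topology

/-- The unnormalised upper tail of the standard normal law, i.e. the integral that enters the Mills
ratio, `F_α` and `f_α`. -/
def gaussTail (z : ℝ) : ℝ := ∫ s in Ioi z, exp (-s ^ 2 / 2)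

/-- The hazard rate of the standard normal law, i.e. the reciprocal of the Mills ratio. It is minus
the logarithmic derivative of `gaussTail`. -/
def gaussHazard (z : ℝ) : ℝ := exp (-z ^ 2 / 2) / gaussTail z

lemma integrable_exp_neg_sq_div_two : Integrable fun s : ℝ => exp (-s ^ 2 / 2) := by
  simpa only [neg_div, neg_mul, one_div_mul_eq_div] using
    integrable_exp_neg_mul_sq (b := 1 / 2) (by norm_num)

lemma integrable_mul_exp_neg_sq_div_two : Integrable fun s : ℝ => s * exp (-s ^ 2 / 2) := by
  simpa only [neg_div, neg_mul, one_div_mul_eq_div] using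
    integrable_mul_exp_neg_mul_sq (b := 1 / 2) (by norm_num)

lemma hasDerivAt_exp_neg_sq_div_two (z : ℝ) :
    HasDerivAt (fun s : ℝ => exp (-s ^ 2 / 2)) (-(z * exp (-z ^ 2 / 2))) z := by
  have hsq : HasDerivAt (fun s : ℝ => -s ^ 2 / 2) (-z) z :=
    ((hasDerivAt_pow 2 z).neg.div_const 2).congr_deriv (by ring)
  exact hsq.exp.congr_deriv (by ring)

lemma tendsto_exp_neg_sq_div_two : Tendsto (fun s : ℝ => exp (-s ^ 2 / 2)) atTop (𝓝 0) := by
  refine tendsto_exp_atBot.comp ?_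
  simp only [neg_div]
  exact tendsto_neg_atTop_atBot.comp ((tendsto_pow_atTop two_ne_zero).atTop_div_const two_pos)

lemma gaussTail_pos (z : ℝ) : 0 < gaussTail z := by
  refine (integral_pos_iff_support_of_nonneg (fun s => (exp_pos _).le)
    integrable_exp_neg_sq_div_two.integrableOn).2 ?_
  simp [Function.support_eq_univ fun s : ℝ => (exp_pos (-s ^ 2 / 2)).ne']

lemma tendsto_gaussTail_atTop : Tendsto gaussTail atTop (𝓝 0) :=
  tendsto_integral_Ioi_zero tendsto_id

lemma hasDerivAt_integral_Ioi {f : ℝ → ℝ} (hf : Integrable f) (hcont : Continuous f) (z : ℝ) :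
    HasDerivAt (fun z => ∫ s in Ioi z, f s) (-f z) z := by
  have htail : (fun z => ∫ s in Ioi z, f s) = fun z =>
      (∫ s in Ioi 0, f s) - ∫ s in (0 : ℝ)..z, f s := by
    funext w
    rw [← intervalIntegral.integral_Ioi_sub_Ioi' hf.integrableOn hf.integrableOn, sub_sub_cancel]
  rw [htail]
  exact (hcont.integral_hasStrictDerivAt 0 z).hasDerivAt.const_sub _

lemma hasDerivAt_gaussTail (z : ℝ) : HasDerivAt gaussTail (-exp (-z ^ 2 / 2)) z :=
  hasDerivAt_integral_Ioi integrable_exp_neg_sq_div_two (by fun_prop) z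

lemma integral_Ioi_mul_exp_neg_sq_div_two (z : ℝ) :
    ∫ s in Ioi z, s * exp (-s ^ 2 / 2) = exp (-z ^ 2 / 2) := by
  have h := integral_Ioi_of_hasDerivAt_of_tendsto' (a := z)
    (fun s _ => (hasDerivAt_exp_neg_sq_div_two s).neg)
    (integrable_mul_exp_neg_sq_div_two.integrableOn.congr_fun (fun s _ => (neg_neg _).symm)
      measurableSet_Ioi) tendsto_exp_neg_sq_div_two.neg
  simpa using h

lemma mul_gaussTail_le (z : ℝ) : z * gaussTail z ≤ exp (-z ^ 2 / 2) := by
  rw [gaussTail, ← integral_const_mul, ← integral_Ioi_mul_exp_neg_sq_div_two]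
  refine setIntegral_mono_on (integrable_exp_neg_sq_div_two.integrableOn.const_mul z)
    integrable_mul_exp_neg_sq_div_two.integrableOn measurableSet_Ioi fun s hs => ?_
  exact mul_le_mul_of_nonneg_right (mem_Ioi.1 hs).le (exp_pos _).le

lemma tendsto_div_one_add_sq_mul_exp :
    Tendsto (fun z : ℝ => z / (1 + z ^ 2) * exp (-z ^ 2 / 2)) atTop (𝓝 0) := by
  refine squeeze_zero' ?_ ?_ tendsto_exp_neg_sq_div_two
  all_goals filter_upwards [eventually_ge_atTop 0] with w hw
  · positivity
  · refine mul_le_of_le_one_left (exp_pos _).le ?_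
    rw [div_le_one (by positivity)]
    nlinarith [sq_nonneg (w - 1)]

/- Gordon's inequality: the difference of the two sides, divided by `1 + z ^ 2`, is nonincreasing
and vanishes at infinity. -/
lemma mul_exp_le_gaussTail (z : ℝ) : z * exp (-z ^ 2 / 2) ≤ (1 + z ^ 2) * gaussTail z := by
  have hderiv (w : ℝ) : HasDerivAt (fun z => gaussTail z - z / (1 + z ^ 2) * exp (-z ^ 2 / 2))
      (-(2 * exp (-w ^ 2 / 2) / (1 + w ^ 2) ^ 2)) w := by
    have hdiv : HasDerivAt (fun z : ℝ => z / (1 + z ^ 2))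
        ((1 * (1 + w ^ 2) - w * (2 * w)) / (1 + w ^ 2) ^ 2) w :=
      (hasDerivAt_id w).div (((hasDerivAt_pow 2 w).const_add 1).congr_deriv (by simp))
        (by positivity)
    refine ((hasDerivAt_gaussTail w).sub
      (hdiv.mul (hasDerivAt_exp_neg_sq_div_two w))).congr_deriv ?_
    field_simp
    ring
  have hanti : Antitone fun z => gaussTail z - z / (1 + z ^ 2) * exp (-z ^ 2 / 2) :=
    antitone_of_hasDerivAt_nonpos hderiv fun w => neg_nonpos.2 (by positivity)
  have hnonneg := hanti.le_of_tendsto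
    (by simpa using tendsto_gaussTail_atTop.sub tendsto_div_one_add_sq_mul_exp) z
  rwa [sub_nonneg, div_mul_eq_mul_div, div_le_iff₀' (by positivity)] at hnonneg

lemma gaussHazard_pos (z : ℝ) : 0 < gaussHazard z := div_pos (exp_pos _) (gaussTail_pos z)

lemma le_gaussHazard (z : ℝ) : z ≤ gaussHazard z :=
  (le_div_iff₀ (gaussTail_pos z)).2 (mul_gaussTail_le z)

lemma mul_gaussHazard_le (z : ℝ) : z * gaussHazard z ≤ 1 + z ^ 2 := by
  rw [gaussHazard, ← mul_div_assoc, div_le_iff₀ (gaussTail_pos z)]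
  exact mul_exp_le_gaussTail z

lemma hasDerivAt_gaussHazard (z : ℝ) :
    HasDerivAt gaussHazard (gaussHazard z * (gaussHazard z - z)) z := by
  have htail := (gaussTail_pos z).ne'
  refine ((hasDerivAt_exp_neg_sq_div_two z).div (hasDerivAt_gaussTail z) htail).congr_deriv ?_
  simp only [gaussHazard]
  field_simp
  ring

lemma continuous_gaussHazard : Continuous gaussHazard :=
  continuous_iff_continuousAt.2 fun z => (hasDerivAt_gaussHazard z).continuousAt

lemma monotone_gaussHazard : Monotone gaussHazard :=
  monotone_of_hasDerivAt_nonneg hasDerivAt_gaussHazard fun z =>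
    mul_nonneg (gaussHazard_pos z).le (sub_nonneg.2 (le_gaussHazard z))

lemma monotone_div_gaussHazard {q : ℝ} (hq : 0 ≤ q) :
    Monotone fun x => x / gaussHazard (q + x) := by
  have hderiv (x : ℝ) : HasDerivAt (fun x => x / gaussHazard (q + x))
      ((1 - x * (gaussHazard (q + x) - (q + x))) / gaussHazard (q + x)) x := by
    have hpos := (gaussHazard_pos (q + x)).ne'
    refine ((hasDerivAt_id x).div ((hasDerivAt_gaussHazard (q + x)).comp_const_add q x)
      hpos).congr_deriv ?_
    simp only [id]
    field_simp
  refine monotone_of_hasDerivAt_nonneg hderiv fun x => div_nonneg ?_ (gaussHazard_pos _).le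
  have hexcess : 0 ≤ gaussHazard (q + x) - (q + x) := sub_nonneg.2 (le_gaussHazard _)
  have hgordon : (q + x) * (gaussHazard (q + x) - (q + x)) ≤ 1 := by
    linarith [mul_gaussHazard_le (q + x)]
  linarith [mul_nonneg hq hexcess]

lemma mul_gaussHazard_le_mul_gaussHazard {q x y : ℝ} (hq : 0 ≤ q) (hxy : x ≤ y) :
    x * gaussHazard (q + y) ≤ y * gaussHazard (q + x) :=
  (div_le_div_iff₀ (gaussHazard_pos _) (gaussHazard_pos _)).1 (monotone_div_gaussHazard hq hxy)

section LogTail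

variable (qa : ℝ)

lemma iotaA_eq_gaussHazard_sub (u : ℝ) : iotaA qa u = gaussHazard (|qa| + u) - u := by
  have hmills : mills (u + |qa|) = exp ((|qa| + u) ^ 2 / 2) * gaussTail (|qa| + u) := by
    rw [add_comm]; rfl
  rw [iotaA, hmills, gaussHazard, neg_div, exp_neg, one_div, mul_inv, ← div_eq_mul_inv]

lemma abs_le_iotaA (u : ℝ) : |qa| ≤ iotaA qa u := by
  rw [iotaA_eq_gaussHazard_sub]
  linarith [le_gaussHazard (|qa| + u)]

lemma continuous_iotaA : Continuous (iotaA qa) := by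
  rw [funext (iotaA_eq_gaussHazard_sub qa)]
  exact (continuous_gaussHazard.comp (continuous_const.add continuous_id)).sub continuous_id

lemma Fal_pos (u : ℝ) : 0 < Fal qa u := div_pos (gaussTail_pos u) (gaussTail_pos |qa|)

lemma fal_zero : fal qa 0 = 0 := by
  have hone : Fal qa |qa| = 1 := div_self (gaussTail_pos |qa|).ne'
  rw [fal, add_zero, hone, log_one]

lemma hasDerivAt_fal (x : ℝ) : HasDerivAt (fal qa) (-gaussHazard (|qa| + x)) x := by
  have hFal : HasDerivAt (fun x => Fal qa (|qa| + x))
      (-exp (-(|qa| + x) ^ 2 / 2) / gaussTail |qa|) x :=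
    ((hasDerivAt_gaussTail (|qa| + x)).comp_const_add |qa| x).div_const _
  refine (hFal.log (Fal_pos qa _).ne').congr_deriv ?_
  have hq := (gaussTail_pos |qa|).ne'
  change -exp (-(|qa| + x) ^ 2 / 2) / gaussTail |qa| / (gaussTail (|qa| + x) / gaussTail |qa|) = _
  rw [div_div_div_cancel_right₀ hq, neg_div, gaussHazard]

lemma concaveOn_fal : ConcaveOn ℝ univ (fal qa) := by
  refine Antitone.concaveOn_univ_of_deriv
    (fun x => (hasDerivAt_fal qa x).differentiableAt) fun x y hxy => ?_
  rw [(hasDerivAt_fal qa x).deriv, (hasDerivAt_fal qa y).deriv]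
  exact neg_le_neg (monotone_gaussHazard (add_le_add_right hxy _))

lemma fal_le_tangent (x y : ℝ) :
    fal qa x ≤ fal qa y - gaussHazard (|qa| + y) * (x - y) := by
  rcases lt_trichotomy x y with h | rfl | h
  · have hslope := (concaveOn_fal qa).le_slope_of_hasDerivAt (mem_univ x) (mem_univ y) h
      (hasDerivAt_fal qa y)
    rw [slope_def_field, le_div_iff₀ (sub_pos.2 h)] at hslope
    linarith
  · simp
  · have hslope := (concaveOn_fal qa).slope_le_of_hasDerivAt (mem_univ y) (mem_univ x) h
      (hasDerivAt_fal qa y)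
    rw [slope_def_field, div_le_iff₀ (sub_pos.2 h)] at hslope
    linarith

/- The function `2 * y * f_α(u) + hazard (|q_α| + y) * u ^ 2` of `u` is nonincreasing up to `y`. -/
lemma gaussHazard_mul_sq_sub_sq_le {x y : ℝ} (hxy : x ≤ y) :
    gaussHazard (|qa| + y) * (y ^ 2 - x ^ 2) ≤ 2 * y * (fal qa x - fal qa y) := by
  have hderiv (u : ℝ) : HasDerivAt (fun u => 2 * y * fal qa u + gaussHazard (|qa| + y) * u ^ 2)
      (2 * (u * gaussHazard (|qa| + y) - y * gaussHazard (|qa| + u))) u :=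
    (((hasDerivAt_fal qa u).const_mul _).add ((hasDerivAt_pow 2 u).const_mul _)).congr_deriv
      (by push_cast; ring)
  have hanti : AntitoneOn (fun u => 2 * y * fal qa u + gaussHazard (|qa| + y) * u ^ 2)
      (Iic y) := by
    refine antitoneOn_of_hasDerivWithinAt_nonpos (convex_Iic y)
      (fun u _ => (hderiv u).continuousAt.continuousWithinAt)
      (fun u _ => (hderiv u).hasDerivWithinAt) fun u hu => ?_
    have huy : u ≤ y := mem_Iic.1 (interior_subset hu)
    linarith [mul_gaussHazard_le_mul_gaussHazard (abs_nonneg qa) huy]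
  have hle := hanti hxy self_mem_Iic hxy
  simp only at hle
  linarith

end LogTail

section Consumption

variable {T k t : ℝ} {v : ℝ → ℝ}

lemma Vtot_eq_intervalIntegral (v : ℝ → ℝ) (ht : 0 ≤ t) : Vtot v t = ∫ s in (0 : ℝ)..t, v s :=
  (intervalIntegral.integral_of_le ht).symm

lemma continuousOn_Vtot (hv : IntegrableOn v (Ioc 0 T)) : ContinuousOn (Vtot v) (Icc 0 T) :=
  intervalIntegral.continuousOn_primitive
    ((integrableOn_Icc_iff_integrableOn_Ioc (by simp)).2 hv)

lemma Vtot_mono (hv : IntegrableOn v (Ioc 0 T)) (hv0 : ∀ t ∈ Ioc 0 T, 0 ≤ v t) :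
    MonotoneOn (Vtot v) (Icc 0 T) := by
  intro s _ t ht hst
  have hsub : Ioc 0 t ⊆ Ioc 0 T := Ioc_subset_Ioc_right ht.2
  refine setIntegral_mono_set (hv.mono_set hsub) ?_ (Ioc_subset_Ioc_right hst).eventuallyLE
  exact (ae_restrict_mem measurableSet_Ioc).mono fun u hu => hv0 u (hsub hu)

lemma Vtot_pos (hT : 0 < T) (hv : IntegrableOn v (Ioc 0 T)) (hvpos : ∀ t ∈ Ioc 0 T, 0 < v t) :
    0 < Vtot v T := by
  rw [Vtot_eq_intervalIntegral v hT.le]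
  exact intervalIntegral.intervalIntegral_pos_of_pos_on
    ((intervalIntegrable_iff_integrableOn_Ioc_of_le hT.le).2 hv)
    (fun t ht => hvpos t (Ioo_subset_Ioc_self ht)) hT

lemma integrableOn_mul_exp_neg_Vtot (hv : IntegrableOn v (Ioc 0 T)) :
    IntegrableOn (fun t => v t * exp (-Vtot v t)) (Ioc 0 T) :=
  (((integrableOn_Icc_iff_integrableOn_Ioc (by simp)).2 hv).mul_continuousOn
    (continuous_exp.comp_continuousOn (continuousOn_Vtot hv).neg) isCompact_Icc).mono_set
      Ioc_subset_Icc_self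

/- The integrand is a.e. the derivative of the monotone function `t ↦ -exp (-V_t)`. -/
lemma integral_mul_exp_neg_Vtot_le (hT : 0 ≤ T) (hv : IntegrableOn v (Ioc 0 T))
    (hv0 : ∀ t ∈ Ioc 0 T, 0 ≤ v t) :
    ∫ t in Ioc 0 T, v t * exp (-Vtot v t) ≤ 1 - exp (-Vtot v T) := by
  set F : ℝ → ℝ := fun t => -exp (-∫ s in (0 : ℝ)..t, v s)
  have hF (t : ℝ) (ht : 0 ≤ t) : F t = -exp (-Vtot v t) := by
    rw [Vtot_eq_intervalIntegral v ht]
  have hmono : MonotoneOn F (uIcc 0 T) := by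
    rw [uIcc_of_le hT]
    intro s hs t ht hst
    rw [hF s hs.1, hF t ht.1]
    exact neg_le_neg (exp_le_exp.2 (neg_le_neg (Vtot_mono hv hv0 hs ht hst)))
  have hderiv : ∫ t in (0 : ℝ)..T, deriv F t = ∫ t in Ioc 0 T, v t * exp (-Vtot v t) := by
    rw [intervalIntegral.integral_of_le hT]
    refine setIntegral_congr_ae measurableSet_Ioc ?_
    filter_upwards [((intervalIntegrable_iff_integrableOn_Ioc_of_le hT).2
      hv).ae_hasDerivAt_integral] with t ht htT
    have hV := ht (uIcc_of_le hT ▸ Ioc_subset_Icc_self htT) 0 left_mem_uIcc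
    have hFt : HasDerivAt F _ t := hV.neg.exp.neg
    simp only [hFt.deriv, Pi.neg_apply]
    rw [← Vtot_eq_intervalIntegral v htT.1.le]
    ring
  have hmem := hmono.intervalIntegral_deriv_mem_uIcc
  have hVT : 0 ≤ Vtot v T := setIntegral_nonneg measurableSet_Ioc hv0
  have hincr : F T - F 0 = 1 - exp (-Vtot v T) := by
    rw [hF T hT]
    simp only [F, intervalIntegral.integral_same, neg_zero, exp_zero]
    ring
  rw [hderiv, hincr, uIcc_of_le (sub_nonneg.2 (exp_le_one_iff.2 (neg_nonpos.2 hVT)))] at hmem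
  exact hmem.2

/- Jensen's inequality for `log` and the density `v * exp (-V)`, in tangent line form. -/
lemma integral_log_sub_Vtot_le (hT : 0 < T) (hv : IntegrableOn v (Ioc 0 T))
    (hlog : IntegrableOn (fun t => log (v t)) (Ioc 0 T)) (hvpos : ∀ t ∈ Ioc 0 T, 0 < v t) :
    ∫ t in Ioc 0 T, (log (v t) - Vtot v t) ≤ T * log ((1 - exp (-Vtot v T)) / T) := by
  set c := (1 - exp (-Vtot v T)) / T with hc
  have hcpos : 0 < c :=
    div_pos (sub_pos.2 (exp_lt_one_iff.2 (neg_lt_zero.2 (Vtot_pos hT hv hvpos)))) hT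
  have hdens := integrableOn_mul_exp_neg_Vtot hv
  have hV : IntegrableOn (Vtot v) (Ioc 0 T) :=
    (continuousOn_Vtot hv).integrableOn_Icc.mono_set Ioc_subset_Icc_self
  have htangent : ∀ t ∈ Ioc 0 T,
      log (v t) - Vtot v t ≤ v t * exp (-Vtot v t) / c + (log c - 1) := fun t ht => by
    have hpos : 0 < v t * exp (-Vtot v t) := mul_pos (hvpos t ht) (exp_pos _)
    have hle := log_le_sub_one_of_pos (div_pos hpos hcpos)
    rw [log_div hpos.ne' hcpos.ne', log_mul (hvpos t ht).ne' (exp_pos _).ne', log_exp] at hle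
    linarith
  calc ∫ t in Ioc 0 T, (log (v t) - Vtot v t)
      ≤ ∫ t in Ioc 0 T, (v t * exp (-Vtot v t) / c + (log c - 1)) :=
        setIntegral_mono_on (hlog.sub hV) ((hdens.div_const c).add (integrable_const _))
          measurableSet_Ioc htangent
    _ = (∫ t in Ioc 0 T, v t * exp (-Vtot v t)) / c + T * (log c - 1) := by
        rw [integral_add (hdens.div_const c) (integrable_const _), integral_div,
          setIntegral_const, measureReal_def, Real.volume_Ioc, sub_zero,
          ENNReal.toReal_ofReal hT.le, smul_eq_mul]
    _ ≤ c * T / c + T * (log c - 1) := by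
        gcongr
        rw [hc, div_mul_cancel₀ _ hT.ne']
        exact integral_mul_exp_neg_Vtot_le hT.le hv fun t ht => (hvpos t ht).le
    _ = T * log c := by rw [mul_div_cancel_left₀ _ hcpos.ne']; ring

lemma sub_mul_pos_of_mem_Icc (hT : 0 < T) (hk : k < 1) (ht : t ∈ Icc 0 T) : 0 < T - t * k := by
  rcases le_or_gt k 0 with hk0 | hk0
  · linarith [mul_nonneg ht.1 (neg_nonneg.2 hk0)]
  · linarith [mul_le_mul_of_nonneg_right ht.2 hk0.le, mul_pos hT (sub_pos.2 hk)]

lemma vk_pos (hT : 0 < T) (hk0 : 0 < k) (hk : k < 1) (ht : t ∈ Icc 0 T) : 0 < vk T k t :=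
  div_pos hk0 (sub_mul_pos_of_mem_Icc hT hk ht)

lemma continuousOn_vk (hT : 0 < T) (hk : k < 1) : ContinuousOn (vk T k) (Icc 0 T) :=
  continuousOn_const.div (by fun_prop) fun _ ht => (sub_mul_pos_of_mem_Icc hT hk ht).ne'

lemma integrableOn_vk (hT : 0 < T) (hk : k < 1) : IntegrableOn (vk T k) (Ioc 0 T) :=
  (continuousOn_vk hT hk).integrableOn_Icc.mono_set Ioc_subset_Icc_self

lemma Vtot_vk (hT : 0 < T) (hk : k < 1) (ht : t ∈ Icc 0 T) :
    Vtot (vk T k) t = log T - log (T - t * k) := by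
  have hsub : uIcc 0 t ⊆ Icc 0 T := uIcc_of_le ht.1 ▸ Icc_subset_Icc_right ht.2
  have hderiv : ∀ s ∈ uIcc 0 t, HasDerivAt (fun s => -log (T - s * k)) (vk T k s) s := by
    intro s hs
    have hlin : HasDerivAt (fun s => T - s * k) (-(1 * k)) s :=
      ((hasDerivAt_id s).mul_const k).const_sub T
    refine (hlin.log (sub_mul_pos_of_mem_Icc hT hk (hsub hs)).ne').neg.congr_deriv ?_
    rw [one_mul, neg_div, neg_neg, vk]
  rw [Vtot_eq_intervalIntegral _ ht.1, intervalIntegral.integral_eq_sub_of_hasDerivAt hderiv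
    ((continuousOn_vk hT hk).mono hsub).intervalIntegrable, zero_mul, sub_zero]
  ring

lemma Vtot_vk_self (hT : 0 < T) (hk : k < 1) : Vtot (vk T k) T = -log (1 - k) := by
  rw [Vtot_vk hT hk ⟨hT.le, le_rfl⟩, show T - T * k = T * (1 - k) by ring,
    log_mul hT.ne' (sub_pos.2 hk).ne']
  ring

lemma integral_log_vk_sub_Vtot (hT : 0 < T) (hk0 : 0 < k) (hk : k < 1) :
    ∫ t in Ioc 0 T, (log (vk T k t) - Vtot (vk T k) t) = T * log k - T * log T := by
  have hconst : ∀ t ∈ Ioc 0 T, log (vk T k t) - Vtot (vk T k) t = log k - log T := by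
    intro t ht
    have htT := Ioc_subset_Icc_self ht
    rw [Vtot_vk hT hk htT, vk, log_div hk0.ne' (sub_mul_pos_of_mem_Icc hT hk htT).ne']
    ring
  rw [setIntegral_congr_fun measurableSet_Ioc hconst, setIntegral_const, measureReal_def,
    Real.volume_Ioc, sub_zero, ENNReal.toReal_ofReal hT.le, smul_eq_mul, mul_sub]

lemma integrableOn_log_of_integrableOn_neg_log {s : Set ℝ} (hs : MeasurableSet s)
    (hvm : Measurable v) (hvpos : ∀ t ∈ s, 0 < v t) (hv : IntegrableOn v s)
    (hlog : IntegrableOn (fun t => max (-log (v t)) 0) s) :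
    IntegrableOn (fun t => log (v t)) s := by
  refine Integrable.mono' (hv.add hlog) (measurable_log.comp hvm).aestronglyMeasurable ?_
  refine (ae_restrict_mem hs).mono fun t ht => ?_
  rw [Real.norm_eq_abs, Pi.add_apply, abs_le]
  constructor
  · linarith [le_max_left (-log (v t)) 0, hvpos t ht]
  · linarith [le_max_right (-log (v t)) 0, log_le_sub_one_of_pos (hvpos t ht)]

end Consumption

section InnerProduct

variable {α F : Type*} [MeasurableSpace α] {μ : Measure α} [NormedAddCommGroup F]
  [InnerProductSpace ℝ F] {f g : α → F}

lemma integral_inner_eq_inner_toLp (hf : MemLp f 2 μ) (hg : MemLp g 2 μ) :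
    ∫ a, ⟪f a, g a⟫ ∂μ = ⟪hf.toLp f, hg.toLp g⟫ := by
  rw [L2.inner_def]
  refine integral_congr_ae ?_
  filter_upwards [hf.coeFn_toLp, hg.coeFn_toLp] with a hfa hga
  rw [hfa, hga]

lemma integral_inner_le_sqrt_mul_sqrt (hf : MemLp f 2 μ) (hg : MemLp g 2 μ) :
    ∫ a, ⟪f a, g a⟫ ∂μ ≤ √(∫ a, ‖f a‖ ^ 2 ∂μ) * √(∫ a, ‖g a‖ ^ 2 ∂μ) := by
  simp only [← real_inner_self_eq_norm_sq]
  rw [integral_inner_eq_inner_toLp hf hg, integral_inner_eq_inner_toLp hf hf,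
    integral_inner_eq_inner_toLp hg hg, ← norm_eq_sqrt_real_inner, ← norm_eq_sqrt_real_inner]
  exact real_inner_le_norm _ _

/- By the first order condition the left side is `o * (⟪u, w⟫ - ‖u‖ ^ 2 / 2)`, which is largest at
`u = w`. -/
lemma quadratic_lagrangian_le {o l m : ℝ} (ho : 0 ≤ o) {θ w : F}
    (hfoc : (o + l) • θ = (o + m) • w) (u : F) :
    o * (⟪u, θ⟫ - ‖u‖ ^ 2 / 2) + (l * ⟪u, θ⟫ - m * ⟪u, w⟫) ≤
      o * (⟪w, θ⟫ - ‖w‖ ^ 2 / 2) + (l * ⟪w, θ⟫ - m * ⟪w, w⟫) := by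
  have hinner (a : F) : (o + l) * ⟪a, θ⟫ = (o + m) * ⟪a, w⟫ := by
    rw [← real_inner_smul_right, hfoc, real_inner_smul_right]
  have hsq : 0 ≤ o * (‖u‖ ^ 2 - 2 * ⟪u, w⟫ + ‖w‖ ^ 2) :=
    mul_nonneg ho (norm_sub_sq_real u w ▸ sq_nonneg _)
  have hself := real_inner_self_eq_norm_sq w
  linear_combination hsq / 2 + hinner u - hinner w - o * hself

end InnerProduct

section Strategy

variable {d : ℕ} {T : ℝ} {θ y w : ℝ → E d} {qa lam : ℝ}

lemma one_le_om {t : ℝ} (ht : t ≤ T) : 1 ≤ om T t := by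
  unfold om
  linarith

lemma continuous_om (T : ℝ) : Continuous (om T) := by
  unfold om
  fun_prop

lemma integrableOn_om_mul {f : ℝ → ℝ} (hf : IntegrableOn f (Ioc 0 T)) :
    IntegrableOn (fun t => om T t * f t) (Ioc 0 T) :=
  (IntegrableOn.continuousOn_mul (continuous_om T).continuousOn
    ((integrableOn_Icc_iff_integrableOn_Ioc (by simp)).2 hf) isCompact_Icc).mono_set
      Ioc_subset_Icc_self

lemma nrm_nonneg (y : ℝ → E d) (t : ℝ) : 0 ≤ nrm y t := Real.sqrt_nonneg _

lemma nrm_sq (y : ℝ → E d) (t : ℝ) : nrm y t ^ 2 = ∫ s in Ioc (0 : ℝ) t, ‖y s‖ ^ 2 :=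
  Real.sq_sqrt (integral_nonneg fun _ => sq_nonneg _)

lemma L2fun.memLp (hy : L2fun T y) : MemLp y 2 (volume.restrict (Ioc 0 T)) :=
  (memLp_two_iff_integrable_sq_norm hy.1.aestronglyMeasurable).2 hy.2

lemma L2fun.integrableOn_inner (hy : L2fun T y) (hw : L2fun T w) :
    IntegrableOn (fun t => ⟪y t, w t⟫) (Ioc 0 T) := by
  refine (L2.integrable_inner (𝕜 := ℝ) (hy.memLp.toLp y) (hw.memLp.toLp w)).congr ?_
  filter_upwards [hy.memLp.coeFn_toLp, hw.memLp.coeFn_toLp] with t hyt hwt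
  rw [hyt, hwt]

lemma ipr_le_nrm_mul_nrm (hy : L2fun T y) (hw : L2fun T w) : ipr y w T ≤ nrm y T * nrm w T :=
  integral_inner_le_sqrt_mul_sqrt hy.memLp hw.memLp

lemma ipr_self (y : ℝ → E d) (t : ℝ) : ipr y y t = nrm y t ^ 2 := by
  simp only [ipr, nrm_sq, real_inner_self_eq_norm_sq]

lemma ae_eq_zero_of_nrm_eq_zero (hy : L2fun T y) (hzero : nrm y T = 0) :
    ∀ᵐ t ∂volume.restrict (Ioc 0 T), y t = 0 := by
  have hint : ∫ t in Ioc 0 T, ‖y t‖ ^ 2 = 0 := by rw [← nrm_sq, hzero, zero_pow two_ne_zero]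
  filter_upwards [(integral_eq_zero_iff_of_nonneg (fun _ => sq_nonneg _) hy.2).1 hint] with t ht
  exact norm_eq_zero.1 (pow_eq_zero_iff two_ne_zero |>.1 ht)

lemma setIntegral_Ioc_add_Ioc {f : ℝ → ℝ} {t : ℝ} (hf : IntegrableOn f (Ioc 0 T))
    (ht : t ∈ Icc 0 T) :
    (∫ s in Ioc 0 t, f s) + ∫ s in Ioc t T, f s = ∫ s in Ioc 0 T, f s := by
  rw [← Ioc_union_Ioc_eq_Ioc ht.1 ht.2, setIntegral_union (Ioc_disjoint_Ioc_of_le le_rfl)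
    measurableSet_Ioc (hf.mono_set (Ioc_subset_Ioc_right ht.2))
    (hf.mono_set (Ioc_subset_Ioc_left ht.1))]

/-- The slack `(y,θ)_t + f_α(‖y‖_t)` which the investment strategy `y` leaves for consumption in
the expected shortfall constraint at time `t`. -/
def esSlack (θ : ℝ → E d) (qa : ℝ) (y : ℝ → E d) (t : ℝ) : ℝ := ipr y θ t + fal qa (nrm y t)

/-- The part of the cost `J` which depends on the investment strategy `y`. -/
def investGain (T : ℝ) (θ y : ℝ → E d) : ℝ :=
  ∫ t in Ioc (0 : ℝ) T, om T t * (⟪y t, θ t⟫ - ‖y t‖ ^ 2 / 2)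

lemma esSlack_le (hθ : L2fun T θ) (hy : L2fun T y) :
    esSlack θ qa y T ≤ (nrm θ T - gaussHazard |qa|) * nrm y T := by
  have hcs := ipr_le_nrm_mul_nrm hy hθ
  have htangent := fal_le_tangent qa (nrm y T) 0
  rw [fal_zero, add_zero, sub_zero] at htangent
  unfold esSlack
  linarith

lemma integrableOn_investGain (hθ : L2fun T θ) (hy : L2fun T y) :
    IntegrableOn (fun t => om T t * (⟪y t, θ t⟫ - ‖y t‖ ^ 2 / 2)) (Ioc 0 T) :=
  integrableOn_om_mul ((hy.integrableOn_inner hθ).sub (hy.2.div_const 2))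

lemma investGain_add_le_of_foc {m : ℝ} (hθ : L2fun T θ) (hw : L2fun T w) (hy : L2fun T y)
    (hfoc : ∀ t ∈ Ioc 0 T, (om T t + lam) • θ t = (om T t + m) • w t) :
    investGain T θ y + (lam * ipr y θ T - m * ipr y w T) ≤
      investGain T θ w + (lam * ipr w θ T - m * ipr w w T) := by
  have hpen {u : ℝ → E d} (hu : L2fun T u) :
      IntegrableOn (fun t => lam * ⟪u t, θ t⟫ - m * ⟪u t, w t⟫) (Ioc 0 T) :=
    ((hu.integrableOn_inner hθ).const_mul lam).sub ((hu.integrableOn_inner hw).const_mul m)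
  have hlagrangian {u : ℝ → E d} (hu : L2fun T u) :
      investGain T θ u + (lam * ipr u θ T - m * ipr u w T) = ∫ t in Ioc 0 T,
        (om T t * (⟪u t, θ t⟫ - ‖u t‖ ^ 2 / 2) + (lam * ⟪u t, θ t⟫ - m * ⟪u t, w t⟫)) := by
    rw [integral_add (integrableOn_investGain hθ hu) (hpen hu),
      integral_sub ((hu.integrableOn_inner hθ).const_mul lam)
        ((hu.integrableOn_inner hw).const_mul m), integral_const_mul, integral_const_mul]
    rfl
  rw [hlagrangian hy, hlagrangian hw]
  exact setIntegral_mono_on ((integrableOn_investGain hθ hy).add (hpen hy))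
    ((integrableOn_investGain hθ hw).add (hpen hw)) measurableSet_Ioc fun t ht =>
      quadratic_lagrangian_le (zero_le_one.trans (one_le_om ht.2)) (hfoc t ht) (y t)

/- The condition `hfoc` is the Kuhn–Tucker condition for maximizing the gain at a prescribed slack,
with multiplier `lam`; it is sufficient because `f_α` is concave. -/
lemma investGain_le_of_foc (hθ : L2fun T θ) (hw : L2fun T w) (hy : L2fun T y) (hlam : 0 ≤ lam)
    (hwpos : 0 < nrm w T)
    (hfoc : ∀ t ∈ Ioc 0 T, (om T t + lam) • θ t =
      (om T t + lam * gaussHazard (|qa| + nrm w T) / nrm w T) • w t)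
    (hslack : esSlack θ qa w T ≤ esSlack θ qa y T) :
    investGain T θ y ≤ investGain T θ w := by
  set h := gaussHazard (|qa| + nrm w T) with hh
  have hm : 0 ≤ lam * h / nrm w T := by
    have := gaussHazard_pos (|qa| + nrm w T)
    positivity
  have hgain := investGain_add_le_of_foc hθ hw hy hfoc
  have hcs : lam * h / nrm w T * ipr y w T ≤ lam * h * nrm y T :=
    (mul_le_mul_of_nonneg_left (ipr_le_nrm_mul_nrm hy hw) hm).trans_eq (by field_simp)
  have hself : lam * h / nrm w T * ipr w w T = lam * h * nrm w T := by
    rw [ipr_self]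
    field_simp
  have htangent := mul_le_mul_of_nonneg_left (fal_le_tangent qa (nrm y T) (nrm w T)) hlam
  have hslack' := mul_le_mul_of_nonneg_left hslack hlam
  simp only [esSlack, ← hh] at hslack' htangent
  linarith

/- By `hbound`, each increment of `(w,θ)` is dominated by the corresponding decrease of
`f_α(‖w‖)`, hence the constraint is tightest at the horizon. -/
lemma esSlack_terminal_le (hθ : L2fun T θ) (hw : L2fun T w) (hwpos : 0 < nrm w T)
    (hbound : ∀ t ∈ Ioc 0 T,
      2 * nrm w T * ⟪w t, θ t⟫ ≤ gaussHazard (|qa| + nrm w T) * ‖w t‖ ^ 2)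
    {t : ℝ} (ht : t ∈ Icc 0 T) : esSlack θ qa w T ≤ esSlack θ qa w t := by
  have hsub : Ioc t T ⊆ Ioc 0 T := Ioc_subset_Ioc_left ht.1
  have hinner := hw.integrableOn_inner hθ
  have hipr : ipr w θ t + ∫ s in Ioc t T, ⟪w s, θ s⟫ = ipr w θ T :=
    setIntegral_Ioc_add_Ioc hinner ht
  have hnrm : nrm w t ^ 2 + ∫ s in Ioc t T, ‖w s‖ ^ 2 = nrm w T ^ 2 := by
    rw [nrm_sq, nrm_sq]
    exact setIntegral_Ioc_add_Ioc hw.2 ht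
  have htail : ∫ s in Ioc t T, 2 * nrm w T * ⟪w s, θ s⟫ ≤
      ∫ s in Ioc t T, gaussHazard (|qa| + nrm w T) * ‖w s‖ ^ 2 :=
    setIntegral_mono_on ((hinner.mono_set hsub).const_mul _) ((hw.2.mono_set hsub).const_mul _)
      measurableSet_Ioc fun s hs => hbound s (hsub hs)
  rw [integral_const_mul, integral_const_mul, eq_sub_of_add_eq' hnrm,
    eq_sub_of_add_eq' hipr] at htail
  have hmono : nrm w t ≤ nrm w T := by
    refine abs_le_of_sq_le_sq' ?_ (nrm_nonneg w T) |>.2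
    have : 0 ≤ ∫ s in Ioc t T, ‖w s‖ ^ 2 := integral_nonneg fun _ => sq_nonneg _
    linarith
  have hfal := htail.trans (gaussHazard_mul_sq_sub_sq_le qa hmono)
  have := le_of_mul_le_mul_left hfal (by positivity)
  unfold esSlack
  linarith

end Strategy

section Tilt

variable {d : ℕ} {T : ℝ} {θ : ℝ → E d} {qa lam u t : ℝ}

/-- The function `t ↦ (ω(t) + λ) / (λ ι_α(u) + u (ω(t) + λ))`, whose square weighs `|θ_t|²` in
`G₁(u,λ)` and for which `ς_λ = ρ₁(λ) * tilt`. -/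
def tilt (T qa lam u t : ℝ) : ℝ := (om T t + lam) / (lam * iotaA qa u + u * (om T t + lam))

lemma tilt_den_eq (qa lam u o : ℝ) :
    lam * iotaA qa u + u * (o + lam) = lam * gaussHazard (|qa| + u) + u * o := by
  rw [iotaA_eq_gaussHazard_sub]
  ring

lemma le_tilt_den (hlam : 0 ≤ lam) (hu : 0 ≤ u) (ht : t ≤ T) :
    lam * gaussHazard |qa| ≤ lam * iotaA qa u + u * (om T t + lam) := by
  have hmono : gaussHazard |qa| ≤ gaussHazard (|qa| + u) :=
    monotone_gaussHazard (le_add_of_nonneg_right hu)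
  rw [tilt_den_eq]
  have := mul_nonneg hu (zero_le_one.trans (one_le_om ht))
  linarith [mul_le_mul_of_nonneg_left hmono hlam]

lemma tilt_den_pos (hlam : 0 < lam) (hu : 0 ≤ u) (ht : t ≤ T) :
    0 < lam * iotaA qa u + u * (om T t + lam) :=
  (mul_pos hlam (gaussHazard_pos _)).trans_le (le_tilt_den hlam.le hu ht)

lemma om_add_pos (hlam : 0 ≤ lam) (ht : t ≤ T) : 0 < om T t + lam := by
  linarith [one_le_om ht]

lemma tilt_pos (hlam : 0 < lam) (hu : 0 ≤ u) (ht : t ≤ T) : 0 < tilt T qa lam u t :=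
  div_pos (om_add_pos hlam.le ht) (tilt_den_pos hlam hu ht)

lemma measurable_tilt (T qa lam u : ℝ) : Measurable (tilt T qa lam u) := by
  have := (continuous_om T).measurable
  unfold tilt
  fun_prop

lemma continuousOn_tilt (hlam : 0 < lam) (ht : t ≤ T) :
    ContinuousOn (fun u => tilt T qa lam u t) (Ici 0) := by
  have := continuous_iotaA qa
  exact continuousOn_const.div (by fun_prop) fun u hu => (tilt_den_pos hlam hu ht).ne'

lemma mul_tilt_le_one (hlam : 0 < lam) (hu : 0 ≤ u) (ht : t ≤ T) : u * tilt T qa lam u t ≤ 1 := by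
  rw [tilt, ← mul_div_assoc, div_le_one (tilt_den_pos hlam hu ht)]
  exact le_add_of_nonneg_left (mul_nonneg hlam.le ((abs_nonneg qa).trans (abs_le_iotaA qa u)))

lemma tilt_le_tilt_zero (hlam : 0 < lam) (hu : 0 ≤ u) (ht : t ∈ Icc 0 T) :
    tilt T qa lam u t ≤ tilt T qa lam u 0 := by
  have hT : 0 ≤ T := ht.1.trans ht.2
  have hom : om T t ≤ om T 0 := by
    unfold om
    linarith [ht.1]
  have hι : 0 ≤ lam * iotaA qa u :=
    mul_nonneg hlam.le ((abs_nonneg qa).trans (abs_le_iotaA qa u))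
  rw [tilt, tilt, div_le_div_iff₀ (tilt_den_pos hlam hu ht.2) (tilt_den_pos hlam hu hT)]
  linarith [mul_le_mul_of_nonneg_right hom hι]

lemma tilt_zero_le (hlam : 0 < lam) (hu : 0 ≤ u) (hT : 0 ≤ T) :
    tilt T qa lam u 0 ≤ (om T 0 + lam) / (lam * gaussHazard |qa|) :=
  div_le_div_of_nonneg_left (om_add_pos hlam.le hT).le (mul_pos hlam (gaussHazard_pos _))
    (le_tilt_den hlam.le hu hT)

lemma G1fun_eq_integral_tilt (T : ℝ) (θ : ℝ → E d) (qa u lam : ℝ) :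
    G1fun T θ qa u lam = ∫ t in Ioc 0 T, tilt T qa lam u t ^ 2 * ‖θ t‖ ^ 2 := by
  simp only [G1fun, tilt, div_pow, div_mul_eq_mul_div]

lemma integrableOn_mul_norm_sq {a : ℝ → ℝ} {c : ℝ} (hθ : L2fun T θ) (ha : Measurable a)
    (hac : ∀ t ∈ Ioc 0 T, |a t| ≤ c) :
    IntegrableOn (fun t => a t ^ 2 * ‖θ t‖ ^ 2) (Ioc 0 T) := by
  refine hθ.2.bdd_mul (c := c ^ 2) (ha.pow_const 2).aestronglyMeasurable ?_
  refine (ae_restrict_mem measurableSet_Ioc).mono fun t ht => ?_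
  rw [norm_pow]
  exact pow_le_pow_left₀ (norm_nonneg _) (hac t ht) 2

lemma integrableOn_tilt_sq_mul (hθ : L2fun T θ) (hlam : 0 < lam) (hu : 0 ≤ u) :
    IntegrableOn (fun t => tilt T qa lam u t ^ 2 * ‖θ t‖ ^ 2) (Ioc 0 T) :=
  integrableOn_mul_norm_sq hθ (measurable_tilt T qa lam u) fun _ ht =>
    (abs_of_pos (tilt_pos hlam hu ht.2)).trans_le
      (tilt_le_tilt_zero hlam hu (Ioc_subset_Icc_self ht))

lemma continuousOn_G1fun (hθ : L2fun T θ) (hlam : 0 < lam) :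
    ContinuousOn (fun u => G1fun T θ qa u lam) (Ici 0) := by
  simp only [G1fun_eq_integral_tilt]
  refine continuousOn_of_dominated
    (bound := fun t => ((om T 0 + lam) / (lam * gaussHazard |qa|)) ^ 2 * ‖θ t‖ ^ 2)
    (fun u hu => (integrableOn_tilt_sq_mul hθ hlam hu).aestronglyMeasurable) (fun u hu => ?_)
    (hθ.2.const_mul _) ?_
  · refine (ae_restrict_mem measurableSet_Ioc).mono fun t ht => ?_
    have hpos := (tilt_pos (qa := qa) hlam hu ht.2).le
    have hle := (tilt_le_tilt_zero (qa := qa) hlam hu (Ioc_subset_Icc_self ht)).trans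
      (tilt_zero_le hlam hu (ht.1.le.trans ht.2))
    rw [norm_mul, norm_pow, norm_pow, norm_norm, Real.norm_of_nonneg hpos]
    gcongr
  · refine (ae_restrict_mem measurableSet_Ioc).mono fun t ht => ?_
    exact ((continuousOn_tilt hlam ht.2).pow 2).mul continuousOn_const

lemma sq_mul_G1fun_le (hθ : L2fun T θ) (hlam : 0 < lam) (hu : 0 ≤ u) :
    u ^ 2 * G1fun T θ qa u lam ≤ nrm θ T ^ 2 := by
  rw [G1fun_eq_integral_tilt, ← integral_const_mul, nrm_sq]
  refine setIntegral_mono_on ((integrableOn_tilt_sq_mul hθ hlam hu).const_mul _) hθ.2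
    measurableSet_Ioc fun t ht => ?_
  have hpos := mul_nonneg hu (tilt_pos (qa := qa) hlam hu ht.2).le
  rw [← mul_assoc, ← mul_pow]
  exact mul_le_of_le_one_left (sq_nonneg _) (pow_le_one₀ hpos (mul_tilt_le_one hlam hu ht.2))

lemma one_le_tilt_zero_mul_nrm (hθ : L2fun T θ) (hT : 0 ≤ T) (hlam : 0 < lam) (hu : 0 ≤ u)
    (hG : G1fun T θ qa u lam = 1) : 1 ≤ tilt T qa lam u 0 * nrm θ T := by
  have hle : G1fun T θ qa u lam ≤ (tilt T qa lam u 0 * nrm θ T) ^ 2 := by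
    rw [G1fun_eq_integral_tilt, mul_pow, nrm_sq, ← integral_const_mul]
    refine setIntegral_mono_on (integrableOn_tilt_sq_mul hθ hlam hu) (hθ.2.const_mul _)
      measurableSet_Ioc fun t ht => ?_
    have hpos := (tilt_pos (qa := qa) hlam hu ht.2).le
    have := tilt_le_tilt_zero (qa := qa) hlam hu (Ioc_subset_Icc_self ht)
    gcongr
  rw [hG] at hle
  exact (one_le_sq_iff₀ (mul_nonneg (tilt_pos hlam hu hT).le (nrm_nonneg θ T))).1 hle

/- With `δ = N - ρ`, the hypothesis `hnorm` reads `lam * (ι - δ) ≤ (T + 1) * δ`. -/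
lemma mul_add_le_mul_sub_of_norm_bound {N ρ ι o : ℝ} (hT : 0 ≤ T) (hlam : 0 ≤ lam) (hρ : 0 < ρ)
    (hι : 0 ≤ ι) (ho : 1 ≤ o) (hN : (T + 2) * N ≤ ι)
    (hnorm : lam * ι + ρ * (T + 1 + lam) ≤ (T + 1 + lam) * N) :
    lam * (ι + ρ) ≤ o * (ι - ρ) := by
  obtain ⟨δ, rfl⟩ : ∃ δ, N = ρ + δ := ⟨N - ρ, by ring⟩
  have hδ : 0 ≤ δ := by
    refine le_of_mul_le_mul_left ?_ (by positivity : 0 < T + 1 + lam)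
    linarith [mul_nonneg hlam hι]
  have hgap : 0 < ι - δ := by
    linarith [mul_nonneg hT hρ.le, mul_nonneg hT hδ]
  have hcross : (T + 1) * δ * (ι + ρ) ≤ (ι - ρ) * (ι - δ) := by
    have hρι : (T + 1) * ρ ≤ ι - ρ - (T + 2) * δ := by linarith
    have hδι : (T + 2) * δ ≤ ι := by linarith [mul_nonneg (by positivity : 0 ≤ T + 2) hρ.le]
    have hsmall : T * (δ * ρ) ≤ (T + 1) * ρ * ((T + 2) * δ) := by
      linarith [mul_nonneg (by positivity : 0 ≤ T ^ 2 + 2 * T + 2) (mul_nonneg hδ hρ.le)]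
    have hlarge : (T + 1) * ρ * ((T + 2) * δ) ≤ (ι - ρ - (T + 2) * δ) * ι :=
      mul_le_mul hρι hδι (by positivity) ((by positivity : 0 ≤ (T + 1) * ρ).trans hρι)
    linarith
  have hsub : lam * (ι + ρ) ≤ ι - ρ := by
    refine le_of_mul_le_mul_right ?_ hgap
    have := mul_le_mul_of_nonneg_right
      (by linarith : lam * (ι - δ) ≤ (T + 1) * δ) (add_nonneg hι hρ.le)
    linarith
  exact hsub.trans (le_mul_of_one_le_left
    ((mul_nonneg hlam (add_nonneg hι hρ.le)).trans hsub) ho)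

lemma two_le_gaussHazard_mul_tilt (hθ : L2fun T θ) (hqθ : (T + 2) * nrm θ T ≤ |qa|)
    (hlam : 0 < lam) (hu : 0 < u) (hG : G1fun T θ qa u lam = 1) (ht : t ∈ Icc 0 T) :
    2 ≤ gaussHazard (|qa| + u) * tilt T qa lam u t := by
  have hT := ht.1.trans ht.2
  have hι := abs_le_iotaA qa u
  have hnorm := one_le_tilt_zero_mul_nrm hθ hT hlam hu.le hG
  rw [tilt, div_mul_eq_mul_div, le_div_iff₀ (tilt_den_pos hlam hu.le hT), one_mul] at hnorm
  simp only [om, sub_zero] at hnorm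
  have hbound := mul_add_le_mul_sub_of_norm_bound hT hlam.le hu ((abs_nonneg qa).trans hι)
    (one_le_om ht.2) (hqθ.trans hι) hnorm
  have hh : gaussHazard (|qa| + u) = iotaA qa u + u := by
    rw [iotaA_eq_gaussHazard_sub, sub_add_cancel]
  rw [tilt, ← mul_div_assoc, le_div_iff₀ (tilt_den_pos hlam hu.le ht.2), hh]
  linarith

end Tilt

lemma apply_csInf_sublevel_eq {α β : Type*} [ConditionallyCompleteLinearOrder α]
    [TopologicalSpace α] [OrderTopology α] [DenselyOrdered α] [LinearOrder β]
    [TopologicalSpace β] [OrderClosedTopology β] {g : α → β} {a : α} {c : β}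
    (hg : ContinuousOn g (Ici a)) (hne : {u | a ≤ u ∧ g u ≤ c}.Nonempty)
    (ha : a < sInf {u | a ≤ u ∧ g u ≤ c}) : g (sInf {u | a ≤ u ∧ g u ≤ c}) = c := by
  set S := {u | a ≤ u ∧ g u ≤ c}
  have hbdd : BddBelow S := ⟨a, fun u hu => hu.1⟩
  have hclosed : IsClosed S := hg.preimage_isClosed_of_isClosed isClosed_Ici isClosed_Iic
  refine le_antisymm (hclosed.csInf_mem hne hbdd).2 ?_
  have hleft (u : α) (hu : u ∈ Ico a (sInf S)) : c ≤ g u :=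
    (not_le.1 fun hcu => hu.2.not_ge (csInf_le hbdd ⟨hu.1, hcu⟩)).le
  have hmem : sInf S ∈ closure (Ico a (sInf S)) := by
    rw [closure_Ico ha.ne]
    exact right_mem_Icc.2 ha.le
  exact ContinuousWithinAt.closure_le hmem continuousWithinAt_const
    ((hg (sInf S) ha.le).mono fun u hu => hu.1) hleft

section Candidate

variable {d : ℕ} {T : ℝ} {θ y : ℝ → E d} {qa lam u t : ℝ}

/-- The candidate investment strategy `ς_λ θ` with multiplier `λ`. -/
def esStrat (T : ℝ) (θ : ℝ → E d) (qa lam : ℝ) : ℝ → E d := fun t => sig T θ qa lam t • θ t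

/-- The solution of the first order condition with multiplier `λ` among the strategies of norm
`u`; its norm is indeed `u` as soon as
`G₁(u,λ) = 1`. -/
def tiltStrat (T : ℝ) (θ : ℝ → E d) (qa lam u : ℝ) : ℝ → E d :=
  fun t => (u * tilt T qa lam u t) • θ t

lemma norm_tiltStrat_sq (T : ℝ) (θ : ℝ → E d) (qa lam u t : ℝ) :
    ‖tiltStrat T θ qa lam u t‖ ^ 2 = (u * tilt T qa lam u t) ^ 2 * ‖θ t‖ ^ 2 := by
  rw [tiltStrat, norm_smul, mul_pow, Real.norm_eq_abs, sq_abs]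

lemma L2fun_tiltStrat (hθ : L2fun T θ) (hlam : 0 < lam) (hu : 0 ≤ u) :
    L2fun T (tiltStrat T θ qa lam u) := by
  have hmeas : Measurable fun t => u * tilt T qa lam u t :=
    (measurable_tilt T qa lam u).const_mul u
  refine ⟨hmeas.smul hθ.1, ?_⟩
  simp only [norm_tiltStrat_sq]
  refine integrableOn_mul_norm_sq (c := 1) hθ hmeas fun t ht => ?_
  rw [abs_of_nonneg (mul_nonneg hu (tilt_pos hlam hu ht.2).le)]
  exact mul_tilt_le_one hlam hu ht.2

lemma nrm_tiltStrat (hu : 0 ≤ u) (hG : G1fun T θ qa u lam = 1) :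
    nrm (tiltStrat T θ qa lam u) T = u := by
  simp only [nrm, norm_tiltStrat_sq, mul_pow, mul_assoc]
  rw [integral_const_mul, ← G1fun_eq_integral_tilt, hG, mul_one, Real.sqrt_sq hu]

lemma tiltStrat_foc (hlam : 0 < lam) (hu : 0 < u) (ht : t ≤ T) :
    (om T t + lam) • θ t =
      (om T t + lam * gaussHazard (|qa| + u) / u) • tiltStrat T θ qa lam u t := by
  have hden := tilt_den_pos (qa := qa) hlam hu.le ht
  rw [tilt_den_eq] at hden
  rw [tiltStrat, smul_smul, tilt, tilt_den_eq, ← mul_assoc, ← mul_div_assoc]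
  congr 1
  rw [eq_div_iff hden.ne']
  field_simp
  ring

lemma two_mul_inner_tiltStrat_le (hθ : L2fun T θ) (hqθ : (T + 2) * nrm θ T ≤ |qa|)
    (hlam : 0 < lam) (hu : 0 < u) (hG : G1fun T θ qa u lam = 1) (ht : t ∈ Icc 0 T) :
    2 * u * ⟪tiltStrat T θ qa lam u t, θ t⟫ ≤
      gaussHazard (|qa| + u) * ‖tiltStrat T θ qa lam u t‖ ^ 2 := by
  have hweight : 0 ≤ u * (u * tilt T qa lam u t) * ‖θ t‖ ^ 2 := by
    have := tilt_pos (qa := qa) hlam hu.le ht.2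
    positivity
  have := mul_le_mul_of_nonneg_right (two_le_gaussHazard_mul_tilt hθ hqθ hlam hu hG ht) hweight
  rw [norm_tiltStrat_sq, tiltStrat, real_inner_smul_left, real_inner_self_eq_norm_sq]
  linarith

/- At `λ = 0` the denominator of `G₁(0,0)` vanishes, so that `G₁(0,0) = 0` and `ρ₁(0) = 0`. -/
lemma G1fun_zero_zero (T : ℝ) (θ : ℝ → E d) (qa : ℝ) : G1fun T θ qa 0 0 = 0 := by
  simp [G1fun]

lemma exists_G1fun_le_one (hθ : L2fun T θ) (hlam : 0 ≤ lam) :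
    {u | 0 ≤ u ∧ G1fun T θ qa u lam ≤ 1}.Nonempty := by
  rcases hlam.eq_or_lt with rfl | hpos
  · exact ⟨0, le_rfl, (G1fun_zero_zero T θ qa).trans_le zero_le_one⟩
  · have hone : 0 < 1 + nrm θ T := by linarith [nrm_nonneg θ T]
    refine ⟨1 + nrm θ T, hone.le, le_of_mul_le_mul_left ?_ (pow_pos hone 2)⟩
    refine (sq_mul_G1fun_le hθ hpos hone.le).trans ?_
    rw [mul_one]
    exact pow_le_pow_left₀ (nrm_nonneg θ T) (le_add_of_nonneg_left zero_le_one) 2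

lemma esStrat_eq_tiltStrat_sInf (hθ : L2fun T θ) (hlam : 0 ≤ lam) :
    esStrat T θ qa lam =
      tiltStrat T θ qa lam (sInf {u | 0 ≤ u ∧ G1fun T θ qa u lam ≤ 1}) := by
  have hne := exists_G1fun_le_one (qa := qa) hθ hlam
  have hnonneg : 0 ≤ sInf {u | 0 ≤ u ∧ G1fun T θ qa u lam ≤ 1} := le_csInf hne fun u hu => hu.1
  funext t
  rw [esStrat, tiltStrat, sig, rho1, if_pos hne, if_neg ENNReal.ofReal_ne_top,
    ENNReal.toReal_ofReal hnonneg, tilt, mul_div_assoc]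

lemma esStrat_eq_zero_or_eq_tiltStrat (hθ : L2fun T θ) (hlam : 0 ≤ lam) :
    esStrat T θ qa lam = 0 ∨
      0 < lam ∧ ∃ ρ, 0 < ρ ∧ G1fun T θ qa ρ lam = 1 ∧
        esStrat T θ qa lam = tiltStrat T θ qa lam ρ := by
  have hne := exists_G1fun_le_one (qa := qa) hθ hlam
  have hsInf := esStrat_eq_tiltStrat_sInf (qa := qa) hθ hlam
  set S := {u | 0 ≤ u ∧ G1fun T θ qa u lam ≤ 1} with hS
  rcases (le_csInf hne fun u hu => hu.1 : 0 ≤ sInf S).eq_or_lt with hzero | hpos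
  · refine .inl ?_
    rw [hsInf, ← hzero]
    funext t
    simp only [tiltStrat, zero_mul, zero_smul, Pi.zero_apply]
  · have hlam' : 0 < lam := hlam.lt_of_ne fun hlam0 => hpos.not_ge <|
      csInf_le ⟨0, fun u hu => hu.1⟩ ⟨le_rfl, by rw [← hlam0, G1fun_zero_zero]; exact zero_le_one⟩
    exact .inr ⟨hlam', sInf S, hpos,
      apply_csInf_sublevel_eq (continuousOn_G1fun hθ hlam') hne hpos, hsInf⟩

lemma L2fun_zero (T : ℝ) : L2fun T (0 : ℝ → E d) :=
  ⟨measurable_zero, by simp⟩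

lemma nrm_zero (t : ℝ) : nrm (0 : ℝ → E d) t = 0 := by
  simp [nrm]

lemma esSlack_zero (θ : ℝ → E d) (qa t : ℝ) : esSlack θ qa 0 t = 0 := by
  simp [esSlack, ipr, nrm_zero, fal_zero]

lemma L2fun_esStrat (hθ : L2fun T θ) (hlam : 0 ≤ lam) : L2fun T (esStrat T θ qa lam) := by
  rcases esStrat_eq_zero_or_eq_tiltStrat (qa := qa) hθ hlam with hzero | ⟨hpos, ρ, hρ, -, hw⟩
  · exact hzero ▸ L2fun_zero T
  · exact hw ▸ L2fun_tiltStrat hθ hpos hρ.le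

lemma esSlack_esStrat (T : ℝ) (θ : ℝ → E d) (qa lam : ℝ) :
    esSlack θ qa (esStrat T θ qa lam) T = -Phi1 T θ qa lam := by
  have hipr : ipr (esStrat T θ qa lam) θ T = ∫ t in Ioc 0 T, sig T θ qa lam t * ‖θ t‖ ^ 2 := by
    simp only [ipr, esStrat, real_inner_smul_left, real_inner_self_eq_norm_sq]
  rw [esSlack, hipr, Phi1, fal]
  unfold esStrat
  ring

lemma esSlack_esStrat_terminal_le (hθ : L2fun T θ) (hqθ : (T + 2) * nrm θ T ≤ |qa|)
    (hlam : 0 ≤ lam) (ht : t ∈ Icc 0 T) :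
    esSlack θ qa (esStrat T θ qa lam) T ≤ esSlack θ qa (esStrat T θ qa lam) t := by
  rcases esStrat_eq_zero_or_eq_tiltStrat (qa := qa) hθ hlam with hzero | ⟨hpos, ρ, hρ, hG, hw⟩
  · rw [hzero, esSlack_zero, esSlack_zero]
  · have hnrm := nrm_tiltStrat hρ.le hG
    rw [hw]
    refine esSlack_terminal_le hθ (L2fun_tiltStrat hθ hpos hρ.le) (hnrm.symm ▸ hρ)
      (fun s hs => ?_) ht
    rw [hnrm]
    exact two_mul_inner_tiltStrat_le hθ hqθ hpos hρ hG (Ioc_subset_Icc_self hs)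

lemma investGain_le_of_esSlack_zero_le (hθ : L2fun T θ) (hy : L2fun T y)
    (hqθ : nrm θ T < gaussHazard |qa|) (hslack : 0 ≤ esSlack θ qa y T) :
    investGain T θ y ≤ investGain T θ 0 := by
  have hnrm : nrm y T = 0 := by
    refine (nrm_nonneg y T).antisymm' (nonpos_of_mul_nonneg_right ?_ (sub_neg.2 hqθ))
    exact hslack.trans (esSlack_le hθ hy)
  refine (integral_congr_ae ?_).le
  filter_upwards [ae_eq_zero_of_nrm_eq_zero hy hnrm] with t ht
  rw [ht, Pi.zero_apply]

lemma investGain_le_investGain_esStrat (hθ : L2fun T θ) (hy : L2fun T y)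
    (hqθ : nrm θ T < gaussHazard |qa|) (hlam : 0 ≤ lam)
    (hslack : esSlack θ qa (esStrat T θ qa lam) T ≤ esSlack θ qa y T) :
    investGain T θ y ≤ investGain T θ (esStrat T θ qa lam) := by
  rcases esStrat_eq_zero_or_eq_tiltStrat (qa := qa) hθ hlam with hzero | ⟨hpos, ρ, hρ, hG, hw⟩
  · rw [hzero, esSlack_zero] at hslack
    rw [hzero]
    exact investGain_le_of_esSlack_zero_le hθ hy hqθ hslack
  · have hnrm := nrm_tiltStrat hρ.le hG
    rw [hw] at hslack ⊢
    refine investGain_le_of_foc hθ (L2fun_tiltStrat hθ hpos hρ.le) hy hlam (hnrm.symm ▸ hρ)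
      (fun t ht => ?_) hslack
    rw [hnrm]
    exact tiltStrat_foc hpos hρ ht.2

end Candidate

section Cost

variable {d : ℕ} {T k qa z : ℝ} {θ y : ℝ → E d} {r v Finv : ℝ → ℝ}

lemma Admiss_vk (hT : 0 < T) (hk0 : 0 < k) (hk : k < 1) (hy : L2fun T y) : Admiss T y (vk T k) := by
  have hlog : ContinuousOn (fun t => max (-log (vk T k t)) 0) (Icc 0 T) :=
    (((continuousOn_vk hT hk).log fun t ht => (vk_pos hT hk0 hk ht).ne').neg).sup
      continuousOn_const
  refine ⟨hy.1, hy.2, ?_, fun t ht => vk_pos hT hk0 hk ht, integrableOn_vk hT hk,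
    hlog.integrableOn_Icc.mono_set Ioc_subset_Icc_self⟩
  unfold vk
  fun_prop

lemma Jcost_eq (hθ : L2fun T θ) (hr : IntegrableOn r (Ioc 0 T)) (hy : L2fun T y) (x : ℝ)
    (v : ℝ → ℝ) :
    Jcost T x r θ y v = Aconst T x r + investGain T θ y +
      ((∫ t in Ioc 0 T, (log (v t) - Vtot v t)) + T * log T - Vtot v T) := by
  have hsplit : ∫ t in Ioc 0 T, om T t * (r t + ⟪y t, θ t⟫ - ‖y t‖ ^ 2 / 2) =
      (∫ t in Ioc 0 T, om T t * r t) + investGain T θ y := by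
    simp only [investGain, add_sub_assoc, mul_add]
    exact integral_add (integrableOn_om_mul hr) (integrableOn_investGain hθ hy)
  rw [Jcost, hsplit, Aconst]
  ring

lemma Jcost_vk (hθ : L2fun T θ) (hr : IntegrableOn r (Ioc 0 T)) (hy : L2fun T y) (hT : 0 < T)
    (hk0 : 0 < k) (hk : k < 1) (x : ℝ) :
    Jcost T x r θ y (vk T k) =
      Aconst T x r + investGain T θ y + (log (1 - k) + T * log k) := by
  rw [Jcost_eq hθ hr hy, integral_log_vk_sub_Vtot hT hk0 hk, Vtot_vk_self hT hk]
  ring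

lemma Jcost_le (hθ : L2fun T θ) (hr : IntegrableOn r (Ioc 0 T)) (hT : 0 < T)
    (hadm : Admiss T y v) (x : ℝ) :
    Jcost T x r θ y v ≤ Aconst T x r + investGain T θ y +
      (-Vtot v T + T * log (1 - exp (-Vtot v T))) := by
  obtain ⟨hym, hy2, hvm, hvpos, hv, hneglog⟩ := hadm
  have hvpos' (t : ℝ) (ht : t ∈ Ioc 0 T) : 0 < v t := hvpos t (Ioc_subset_Icc_self ht)
  have hlt : 0 < 1 - exp (-Vtot v T) :=
    sub_pos.2 (exp_lt_one_iff.2 (neg_neg_of_pos (Vtot_pos hT hv hvpos')))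
  have hlog := integrableOn_log_of_integrableOn_neg_log measurableSet_Ioc hvm hvpos' hv hneglog
  have hcons := integral_log_sub_Vtot_le hT hv hlog hvpos'
  rw [log_div hlt.ne' hT.ne'] at hcons
  rw [Jcost_eq hθ hr ⟨hym, hy2⟩]
  linarith

lemma Gam1_eq (T : ℝ) (θ : ℝ → E d) (qa z : ℝ) (Finv : ℝ → ℝ) (k : ℝ) :
    Gam1 T θ qa z Finv k =
      log (1 - k) + T * log k + investGain T θ (ystarE T θ qa z Finv k) := by
  rw [Gam1, investGain]
  congr 2
  funext t
  rw [ystarE, real_inner_smul_left, real_inner_self_eq_norm_sq, norm_smul, mul_pow,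
    Real.norm_eq_abs, sq_abs]
  ring

lemma esSlack_ystarE (hz : z < 1)
    (hFinv : ∀ b, 0 ≤ b → b ≤ -log (1 - z) → 0 ≤ Finv b ∧ Phi1 T θ qa (Finv b) = b)
    (hk : k ∈ Icc 0 z) :
    0 ≤ Finv (log ((1 - k) / (1 - z))) ∧
      esSlack θ qa (ystarE T θ qa z Finv k) T = log (1 - z) - log (1 - k) := by
  have hz' : 0 < 1 - z := sub_pos.2 hz
  have hk' : 0 < 1 - k := hz'.trans_le (sub_le_sub_left hk.2 1)
  have hzk : log (1 - z) ≤ log (1 - k) := log_le_log hz' (sub_le_sub_left hk.2 1)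
  have hlogk : log (1 - k) ≤ 0 := log_nonpos hk'.le (sub_le_self 1 hk.1)
  have hlog : log ((1 - k) / (1 - z)) = log (1 - k) - log (1 - z) := log_div hk'.ne' hz'.ne'
  obtain ⟨hnonneg, hPhi⟩ := hFinv (log ((1 - k) / (1 - z))) (by linarith) (by linarith)
  refine ⟨hnonneg, (esSlack_esStrat T θ qa (Finv (log ((1 - k) / (1 - z))))).trans ?_⟩
  rw [hPhi, hlog, neg_sub]

lemma ESOK_ystarE_vk (hθ : L2fun T θ) (hT : 0 < T) (hqθ : (T + 2) * nrm θ T ≤ |qa|) (hz : z < 1)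
    (hFinv : ∀ b, 0 ≤ b → b ≤ -log (1 - z) → 0 ≤ Finv b ∧ Phi1 T θ qa (Finv b) = b)
    (hk : k ∈ Ioc 0 z) : ESOK T θ (ystarE T θ qa z Finv k) (vk T k) qa z := by
  intro t ht
  have hk1 : k < 1 := hk.2.trans_lt hz
  obtain ⟨hlam, hterminal⟩ := esSlack_ystarE hz hFinv (Ioc_subset_Icc_self hk)
  have hslack : esSlack θ qa (ystarE T θ qa z Finv k) T ≤
      esSlack θ qa (ystarE T θ qa z Finv k) t := esSlack_esStrat_terminal_le hθ hqθ hlam ht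
  have hV : Vtot (vk T k) t ≤ -log (1 - k) := Vtot_vk_self hT hk1 ▸
    Vtot_mono (integrableOn_vk hT hk1)
      (fun s hs => (vk_pos hT hk.1 hk1 (Ioc_subset_Icc_self hs)).le) ht
      (right_mem_Icc.2 hT.le) ht.2
  rw [hterminal, esSlack] at hslack
  linarith

/- The dominating `k = 1 - exp (-V_T)` makes `v^k` consume in total as much as `v`. -/
lemma exists_Jcost_le_Gam1 (hθ : L2fun T θ) (hr : IntegrableOn r (Ioc 0 T)) (hT : 0 < T)
    (hqθ : nrm θ T < gaussHazard |qa|) (hz : z < 1)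
    (hFinv : ∀ b, 0 ≤ b → b ≤ -log (1 - z) → 0 ≤ Finv b ∧ Phi1 T θ qa (Finv b) = b)
    (hadm : Admiss T y v) (hES : ESOK T θ y v qa z) (x : ℝ) :
    ∃ k ∈ Ioc 0 z, Jcost T x r θ y v ≤ Aconst T x r + Gam1 T θ qa z Finv k := by
  have hy : L2fun T y := ⟨hadm.1, hadm.2.1⟩
  have hterminal := hES T (right_mem_Icc.2 hT.le)
  have hV : 0 < Vtot v T :=
    Vtot_pos hT hadm.2.2.2.2.1 fun t ht => hadm.2.2.2.1 t (Ioc_subset_Icc_self ht)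
  have hnonpos : esSlack θ qa y T ≤ 0 := (esSlack_le hθ hy).trans
    (mul_nonpos_of_nonpos_of_nonneg (sub_nonpos.2 hqθ.le) (nrm_nonneg y T))
  have hexp : 1 - z ≤ exp (-Vtot v T) := by
    rw [← log_le_iff_le_exp (sub_pos.2 hz)]
    unfold esSlack at hnonpos
    linarith
  have hk : 1 - exp (-Vtot v T) ∈ Ioc 0 z :=
    ⟨sub_pos.2 (exp_lt_one_iff.2 (neg_neg_of_pos hV)), sub_le_comm.1 hexp⟩
  obtain ⟨hlam, hslack⟩ := esSlack_ystarE hz hFinv (Ioc_subset_Icc_self hk)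
  have hlogk : log (1 - (1 - exp (-Vtot v T))) = -Vtot v T := by rw [sub_sub_cancel, log_exp]
  have hinvest : investGain T θ y ≤
      investGain T θ (ystarE T θ qa z Finv (1 - exp (-Vtot v T))) := by
    refine investGain_le_investGain_esStrat hθ hy hqθ hlam (hslack.trans_le ?_)
    rw [hlogk, esSlack]
    linarith
  refine ⟨1 - exp (-Vtot v T), hk, (Jcost_le hθ hr hT hadm x).trans ?_⟩
  rw [Gam1_eq, hlogk]
  linarith

lemma nrm_lt_gaussHazard (hT : 0 ≤ T) (hqθ : (T + 2) * nrm θ T ≤ |qa|) :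
    nrm θ T < gaussHazard |qa| := by
  linarith [le_gaussHazard |qa|, gaussHazard_pos |qa|, nrm_nonneg θ T,
    mul_nonneg hT (nrm_nonneg θ T)]

end Cost

theorem stmt10_general {d : ℕ} {T : ℝ} (hT : 0 < T) {θ : ℝ → E d} (hθ : L2fun T θ)
    {qa : ℝ} (hqθ : (T + 2) * nrm θ T ≤ |qa|)
    {r : ℝ → ℝ} (hr : IntegrableOn r (Ioc 0 T)) {x : ℝ} (_hx : 0 < x)
    {z : ℝ} (hz : z < 1) {Finv : ℝ → ℝ}
    (hFinv : ∀ b, 0 ≤ b → b ≤ -log (1 - z) → 0 ≤ Finv b ∧ Phi1 T θ qa (Finv b) = b)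
    {γ : ℝ} (hγmem : γ ∈ Ioc 0 z)
    (hγmax : ∀ k ∈ Ioc 0 z, Gam1 T θ qa z Finv k ≤ Gam1 T θ qa z Finv γ) :
    Admiss T (ystarE T θ qa z Finv γ) (vk T γ) ∧
    ESOK T θ (ystarE T θ qa z Finv γ) (vk T γ) qa z ∧
    Jcost T x r θ (ystarE T θ qa z Finv γ) (vk T γ) = Aconst T x r + Gam1 T θ qa z Finv γ ∧
    ∀ (y : ℝ → E d) (v : ℝ → ℝ), Admiss T y v → ESOK T θ y v qa z →
      Jcost T x r θ y v ≤ Aconst T x r + Gam1 T θ qa z Finv γ := by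
  have hγ1 : γ < 1 := hγmem.2.trans_lt hz
  have hlam := (esSlack_ystarE hz hFinv (Ioc_subset_Icc_self hγmem)).1
  have hw : L2fun T (ystarE T θ qa z Finv γ) := L2fun_esStrat hθ hlam
  refine ⟨Admiss_vk hT hγmem.1 hγ1 hw, ESOK_ystarE_vk hθ hT hqθ hz hFinv hγmem, ?_,
    fun y v hadm hES => ?_⟩
  · rw [Jcost_vk hθ hr hw hT hγmem.1 hγ1, Gam1_eq]
    ring
  · obtain ⟨k, hk, hle⟩ :=
      exists_Jcost_le_Gam1 hθ hr hT (nrm_lt_gaussHazard hT.le hqθ) hz hFinv hadm hES x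
    linarith [hγmax k hk]

/-- Theorem 4.8 of the paper. -/
theorem stmt10 {d : ℕ} (hd : 1 ≤ d) {T : ℝ} (hT : 0 < T)
    (θ : ℝ → E d) (hθm : Measurable θ)
    (hθ2 : IntegrableOn (fun t => ‖θ t‖ ^ 2) (Set.Ioc 0 T))
    {a qa : ℝ} (ha0 : 0 < a) (ha2 : a < 1 / 2) (hqneg : qa < 0)
    (hquant : (∫ s in Set.Iic qa, Real.exp (-s ^ 2 / 2)) = a * Real.sqrt (2 * π))
    (r : ℝ → ℝ) (hr : IntegrableOn r (Set.Ioc 0 T)) {x : ℝ} (hx : 0 < x)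
    (hθpos : 0 < nrm θ T)
    {z : ℝ} (hz0 : 0 < z)
    (hz1 : z < 1 - Fal qa (|qa| + nrm θ T) * Real.exp (nrm θ T ^ 2))
    (hqbig : max 1 (2 * (T + 1) * nrm θ T) ≤ |qa|)
    (Finv : ℝ → ℝ)
    (hFinv : ∀ b : ℝ, 0 ≤ b → b ≤ -Real.log (1 - z) →
      Finv b ∈ Set.Icc 0 (lamMax' T θ qa) ∧ Phi1 T θ qa (Finv b) = b)
    {γ : ℝ} (hγmem : γ ∈ Set.Ioc 0 z)
    (hγmax : ∀ k ∈ Set.Ioc (0:ℝ) z, Gam1 T θ qa z Finv k ≤ Gam1 T θ qa z Finv γ) :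
    Admiss T (ystarE T θ qa z Finv γ) (vk T γ) ∧
    ESOK T θ (ystarE T θ qa z Finv γ) (vk T γ) qa z ∧
    Jcost T x r θ (ystarE T θ qa z Finv γ) (vk T γ) = Aconst T x r + Gam1 T θ qa z Finv γ ∧
    ∀ (y : ℝ → E d) (v : ℝ → ℝ), Admiss T y v → ESOK T θ y v qa z →
      Jcost T x r θ y v ≤ Aconst T x r + Gam1 T θ qa z Finv γ := by
  have hqθ : (T + 2) * nrm θ T ≤ |qa| := by
    linarith [(le_max_right _ _).trans hqbig, mul_nonneg hT.le (nrm_nonneg θ T)]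
  exact stmt10_general hT ⟨hθm, hθ2⟩ hqθ hr hx
    (hz1.trans (sub_lt_self 1 (mul_pos (Fal_pos qa _) (exp_pos _))))
    (fun b hb hbz => (hFinv b hb hbz).imp_left And.left) hγmem hγmax
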